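/- The following identity holds: (6√15/π³) · ∑'_{(m,k)} [ 1/(m² + 15k²)² − 1/(3m² + 5k²)² + 1/(2m² + mk + 2k²)² − 1/(m² + mk + 4k²)² ] = (8/5)·d_3, where d_3 = (3√3/(4π))·L(χ_{-3},2). -/

import Mathlib

/-- The quadratic Dirichlet character modulo 3:
`χ₋₃(n) = 1` if `n ≡ 1 (mod 3)`, `-1` if `n ≡ 2 (mod 3)`, `0` if `3 ∣ n`. -/
def chiNeg3 (n : ℕ) : ℝ :=
  if n % 3 = 1 then 1 else if n % 3 = 2 then -1 else 0

/-- `d₃ = (3√3/(4π)) · L(χ₋₃, 2)`. -/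
noncomputable def d3 : ℝ :=
  (3 * Real.sqrt 3 / (4 * Real.pi)) * ∑' n : ℕ, chiNeg3 (n + 1) / ((n : ℝ) + 1) ^ 2

/-!
Fix a form `f = a x² + b x y + c y²` of discriminant `-15` and a prime `p ∤ a`. The solutions of
`f (x, y) = p n` that are not divisible by `p` are classified by the ratio `x / y` modulo `p`, a
root of `a s² + b s + c`. All solutions with `x ≡ s y` modulo `p` are parametrized by the solutions
of `f_s = n`, where `f (p x + s y, y) = p f_s (x, y)`, and `f_s` again has discriminant `-15`. Since
each genus of discriminant `-15` consists of one class, the class of `f_s` is determined by the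
values at `p` of the characters `χ₋₃` and `χ₅`. Hence the difference of the representation numbers
of the two classes satisfies the recursions attached to the Euler product of
`L(χ₋₃, s) L(χ₅, s)`, so its Dirichlet series is `2 L(χ₋₃, s) L(χ₅, s)`.

The forms `x² + 15 y²` and `3 x² + 5 y²` are the restrictions of `x² + x y + 4 y²` and
`3 x² + 3 x y + 2 y²` to the vectors with even second coordinate. Parity considerations show that
passing to them multiplies the difference by `1 + 2 * 2⁻ˢ + 2 * 4⁻ˢ`. At `s = 2`, the value
`L(χ₅, 2) = 4 π² / (25 √5)` comes from the Fourier series of the Bernoulli polynomial `B₂` at `1/5`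
and `2/5`.
-/

/-- The binary quadratic form `a x² + b x y + c y²` over `ℤ`. -/
def binForm (a b c : ℤ) : QuadraticForm ℤ (ℤ × ℤ) :=
  a • QuadraticMap.linMulLin (LinearMap.fst ℤ ℤ ℤ) (LinearMap.fst ℤ ℤ ℤ) +
    b • QuadraticMap.linMulLin (LinearMap.fst ℤ ℤ ℤ) (LinearMap.snd ℤ ℤ ℤ) +
    c • QuadraticMap.linMulLin (LinearMap.snd ℤ ℤ ℤ) (LinearMap.snd ℤ ℤ ℤ)

lemma binForm_apply (a b c : ℤ) (v : ℤ × ℤ) :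
    binForm a b c v = a * v.1 ^ 2 + b * v.1 * v.2 + c * v.2 ^ 2 := by
  simp only [binForm, add_apply, smul_apply, QuadraticMap.linMulLin_apply,
    LinearMap.fst_apply, LinearMap.snd_apply, smul_eq_mul]
  ring

lemma pos_of_discrim_neg {a b c : ℤ} (ha : 0 < a) (hD : discrim a b c < 0) : 0 < c := by
  rw [discrim] at hD
  nlinarith [sq_nonneg b]

section Equivalence

lemma binForm_equivalent_swap (a b c : ℤ) : (binForm a b c).Equivalent (binForm c b a) :=
  ⟨{ LinearEquiv.prodComm ℤ ℤ ℤ with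
      map_app' := fun v => by
        change binForm c b a (v.2, v.1) = binForm a b c v
        rw [binForm_apply, binForm_apply]
        ring }⟩

lemma binForm_equivalent_neg (a b c : ℤ) : (binForm a b c).Equivalent (binForm a (-b) c) :=
  ⟨{ (LinearEquiv.refl ℤ ℤ).prodCongr (LinearEquiv.neg ℤ) with
      map_app' := fun v => by simp [binForm_apply] }⟩

lemma binForm_equivalent_shear (a b c k : ℤ) :
    (binForm a b c).Equivalent (binForm a (b + 2 * a * k) (a * k ^ 2 + b * k + c)) :=
  (binForm_equivalent_swap a b c).trans <| .trans
    ⟨{ (LinearEquiv.refl ℤ ℤ).skewProd (LinearEquiv.refl ℤ ℤ) (LinearMap.lsmul ℤ ℤ (-k)) with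
        map_app' := fun v => by
          change binForm _ _ a (v.1, v.2 + -k * v.1) = binForm c b a v
          rw [binForm_apply, binForm_apply]
          ring }⟩
    (binForm_equivalent_swap (a * k ^ 2 + b * k + c) (b + 2 * a * k) a)

theorem exists_equivalent_reduced {a b c : ℤ} (ha : 0 < a) (hD : discrim a b c < 0) :
    ∃ a' b' c', 0 ≤ b' ∧ b' ≤ a' ∧ a' ≤ c' ∧ discrim a' b' c' = discrim a b c ∧
      (binForm a b c).Equivalent (binForm a' b' c') := by
  induction h : a.toNat using Nat.strong_induction_on generalizing a b c with
  | _ n ih =>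
    obtain ⟨k, hk⟩ : ∃ k, |b + 2 * a * k| ≤ a :=
      ⟨-((b + a) / (2 * a)), by
        have := Int.emod_add_mul_ediv (b + a) (2 * a)
        have := Int.emod_nonneg (b + a) (by lia : 2 * a ≠ 0)
        have := Int.emod_lt_of_pos (b + a) (by lia : 0 < 2 * a)
        rw [abs_le]; constructor <;> linarith⟩
    set c' := a * k ^ 2 + b * k + c with hc'
    have hequiv := binForm_equivalent_shear a b c k
    have hdisc : discrim a (b + 2 * a * k) c' = discrim a b c := by
      simp only [discrim, hc']; ring
    rcases le_or_gt a c' with hac | hca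
    · have hdisc' : discrim a |b + 2 * a * k| c' = discrim a b c := by
        rw [← hdisc, discrim, discrim, sq_abs]
      refine ⟨a, |b + 2 * a * k|, c', abs_nonneg _, hk, hac, hdisc', hequiv.trans ?_⟩
      rcases abs_choice (b + 2 * a * k) with habs | habs <;> rw [habs]
      · exact .refl _
      · exact binForm_equivalent_neg _ _ _
    · have hc'_pos : 0 < c' := pos_of_discrim_neg ha (hdisc.trans_lt hD)
      have hdisc' : discrim c' (b + 2 * a * k) a = discrim a b c := by
        rw [← hdisc, discrim, discrim]; ring
      obtain ⟨a', b', c'', hb, hba, hac, hd, he⟩ :=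
        ih c'.toNat (by lia) hc'_pos (hdisc' ▸ hD) rfl
      exact ⟨a', b', c'', hb, hba, hac, hd.trans hdisc',
        hequiv.trans ((binForm_equivalent_swap _ _ _).trans he)⟩

end Equivalence

/-- A form in each of the two genera of discriminant `-15`: `e` is the common nonzero value on it of
the Legendre symbols modulo `3` and `5`, and each genus consists of a single class. -/
def genusForm (e : ℤˣ) : QuadraticForm ℤ (ℤ × ℤ) :=
  if e = 1 then binForm 1 1 4 else binForm 2 1 2

@[simp] lemma genusForm_one : genusForm 1 = binForm 1 1 4 := if_pos rfl

@[simp] lemma genusForm_neg_one : genusForm (-1) = binForm 2 1 2 := if_neg (by decide)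

theorem exists_equivalent_genusForm {a b c : ℤ} (ha : 0 < a) (hD : discrim a b c = -15) :
    ∃ e, (binForm a b c).Equivalent (genusForm e) := by
  obtain ⟨a', b', c', hb, hba, hac, hd, hequiv⟩ :=
    exists_equivalent_reduced ha (hD.trans_lt (by norm_num))
  rw [hD, discrim] at hd
  have ha' : a' ≤ 2 := by nlinarith
  have hcases : (a' = 1 ∧ b' = 1 ∧ c' = 4) ∨ (a' = 2 ∧ b' = 1 ∧ c' = 2) := by
    have : b' ≤ 2 := by lia
    have : 0 ≤ a' := by lia
    interval_cases a' <;> interval_cases b' <;> lia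
  rcases hcases with ⟨rfl, rfl, rfl⟩ | ⟨rfl, rfl, rfl⟩
  · exact ⟨1, by rwa [genusForm_one]⟩
  · exact ⟨-1, by rwa [genusForm_neg_one]⟩

lemma binForm_three_three_two_equivalent : (binForm 3 3 2).Equivalent (genusForm (-1)) := by
  rw [genusForm_neg_one]
  exact (binForm_equivalent_swap 3 3 2).trans <|
    (binForm_equivalent_neg 2 3 3).trans (binForm_equivalent_shear 2 (-3) 3 1)

lemma exists_equivalent_not_dvd (p : ℕ) [Fact p.Prime] (e : ℤˣ) :
    ∃ a b c, 0 < a ∧ ¬(p : ℤ) ∣ a ∧ discrim a b c = -15 ∧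
      (binForm a b c).Equivalent (genusForm e) := by
  rcases Int.units_eq_one_or e with rfl | rfl
  · refine ⟨1, 1, 4, one_pos, ?_, by decide, by simpa using .refl _⟩
    exact_mod_cast (Fact.out : p.Prime).not_dvd_one
  · rcases eq_or_ne p 2 with rfl | hp
    · exact ⟨3, 3, 2, by norm_num, by decide, by decide, binForm_three_three_two_equivalent⟩
    · refine ⟨2, 1, 2, by norm_num, ?_, by decide, by simpa using .refl _⟩
      exact mod_cast mt (Nat.prime_dvd_prime_iff_eq Fact.out Nat.prime_two).1 hp

local instance fact_prime_five : Fact (Nat.Prime 5) := ⟨Nat.prime_five⟩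

section GenusCharacters

variable {q : ℕ} [Fact q.Prime]

lemma legendreSym_binForm_of_dvd_discrim {a b c : ℤ} (hq : q ≠ 2) (ha : ¬(q : ℤ) ∣ a)
    (hD : (q : ℤ) ∣ discrim a b c) (v : ℤ × ℤ) :
    legendreSym q (binForm a b c v) = 0 ∨
      legendreSym q (binForm a b c v) = legendreSym q a := by
  rw [← ZMod.intCast_zmod_eq_zero_iff_dvd] at ha hD
  have htwo : ((2 : ℤ) : ZMod q) ≠ 0 := by
    exact_mod_cast Ring.two_ne_zero (by rwa [ZMod.ringChar_zmod_n])
  set m := 2 * a * v.1 + b * v.2 with hm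
  have hsq : legendreSym q (m ^ 2) = legendreSym q (2 ^ 2 * (a * binForm a b c v)) := by
    have : (m ^ 2 : ZMod q) = (2 ^ 2 * (a * binForm a b c v) : ℤ) := by
      rw [binForm_apply, hm]
      rw [discrim] at hD
      push_cast at hD ⊢
      linear_combination (v.2 : ZMod q) ^ 2 * hD
    simp only [legendreSym, Int.cast_pow, this]
  rw [legendreSym.mul, legendreSym.mul, legendreSym.sq_one' q htwo, one_mul] at hsq
  have hvalue : legendreSym q (binForm a b c v) = legendreSym q a * legendreSym q (m ^ 2) := by
    rw [hsq, ← mul_assoc, ← sq, legendreSym.sq_one q ha, one_mul]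
  rw [hvalue]
  by_cases hm0 : (m : ZMod q) = 0
  · simp [(legendreSym.eq_zero_iff q (m ^ 2)).2 (by simp [hm0])]
  · simp [legendreSym.sq_one' q hm0]

lemma legendreSym_genusForm_one_zero (hq : q = 3 ∨ q = 5) (e : ℤˣ) :
    legendreSym q (genusForm e (1, 0)) = e := by
  have mod_three : legendreSym 3 2 = -1 := by decide
  have mod_five : legendreSym 5 2 = -1 := by decide
  have two : legendreSym q 2 = -1 := by
    rcases hq with rfl | rfl
    exacts [mod_three, mod_five]
  rcases Int.units_eq_one_or e with rfl | rfl <;> simp [binForm_apply, two, legendreSym.at_one]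

lemma legendreSym_genusForm (hq : q = 3 ∨ q = 5) (e : ℤˣ) (v : ℤ × ℤ) :
    legendreSym q (genusForm e v) = 0 ∨ legendreSym q (genusForm e v) = e := by
  have htwo : q ≠ 2 := by lia
  have hdvd : (q : ℤ) ∣ discrim 1 1 4 ∧ (q : ℤ) ∣ discrim 2 1 2 := by
    rcases hq with rfl | rfl <;> decide
  have hone : ¬(q : ℤ) ∣ 1 ∧ ¬(q : ℤ) ∣ 2 := by rcases hq with rfl | rfl <;> decide
  rw [← legendreSym_genusForm_one_zero hq e]
  rcases Int.units_eq_one_or e with rfl | rfl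
  · simpa [binForm_apply] using legendreSym_binForm_of_dvd_discrim htwo hone.1 hdvd.1 v
  · simpa [binForm_apply] using legendreSym_binForm_of_dvd_discrim htwo hone.2 hdvd.2 v

end GenusCharacters

section Dilate

variable {R : Type*}

/-- The coefficients of the Dirichlet series `p ^ (-s) * ∑ F n * n ^ (-s)`. -/
def dilate [Zero R] (p : ℕ) (F : ℕ → R) (n : ℕ) : R := if p ∣ n then F (n / p) else 0

lemma dilate_of_not_dvd [Zero R] {p n : ℕ} (h : ¬p ∣ n) (F : ℕ → R) : dilate p F n = 0 :=
  if_neg h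

lemma dilate_mul_left [Zero R] {p : ℕ} (hp : p ≠ 0) (F : ℕ → R) (n : ℕ) :
    dilate p F (p * n) = F n := by
  rw [dilate, if_pos (dvd_mul_right p n), Nat.mul_div_cancel_left n (Nat.pos_of_ne_zero hp)]

lemma dilate_mul_mul [Zero R] {p : ℕ} (hp : p ≠ 0) (q : ℕ) (F : ℕ → R) (n : ℕ) :
    dilate (p * q) F (p * n) = dilate q F n := by
  simp only [dilate, Nat.mul_dvd_mul_iff_left (Nat.pos_of_ne_zero hp),
    Nat.mul_div_mul_left _ _ (Nat.pos_of_ne_zero hp)]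

lemma dilate_sub [AddGroup R] (p : ℕ) (F G : ℕ → R) (n : ℕ) :
    dilate p (fun n => F n - G n) n = dilate p F n - dilate p G n := by
  rw [dilate, dilate, dilate]
  split_ifs <;> simp

end Dilate

section RepresentationNumbers

variable {M N : Type*} [AddCommGroup M] [AddCommGroup N]

/-- The number of representations of `n` by the quadratic form `Q`, as an integer so that
differences can be formed; it is `0` if there are infinitely many. -/
noncomputable def repCount (Q : QuadraticForm ℤ M) (n : ℕ) : ℤ := ({v | Q v = n}.ncard : ℤ)

lemma ncard_range_inter_eq_repCount {Q : QuadraticForm ℤ M} {Q' : QuadraticForm ℤ N} {φ : N → M}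
    {k : ℤ} (hφ : φ.Injective) (hk : k ≠ 0) (h : ∀ w, Q (φ w) = k * Q' w) (n : ℕ) :
    ({v | Q v = k * n ∧ v ∈ Set.range φ}.ncard : ℤ) = repCount Q' n := by
  have himage : {v | Q v = k * n ∧ v ∈ Set.range φ} = φ '' {w | Q' w = n} := by
    ext v
    constructor
    · rintro ⟨hv, w, rfl⟩
      exact ⟨w, mul_left_cancel₀ hk ((h w).symm.trans hv), rfl⟩
    · rintro ⟨w, hw, rfl⟩
      exact ⟨by rw [h, Set.mem_ofPred.1 hw], w, rfl⟩
  rw [himage, Set.ncard_image_of_injective _ hφ, repCount]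

lemma repCount_congr {Q : QuadraticForm ℤ M} {Q' : QuadraticForm ℤ N} (h : Q.Equivalent Q') :
    repCount Q = repCount Q' := by
  obtain ⟨e⟩ := h.symm
  funext n
  rw [← ncard_range_inter_eq_repCount (Q := Q) e.injective one_ne_zero (by simp)]
  simp [repCount]

end RepresentationNumbers

lemma ncard_dvd_eq_dilate (a b c : ℤ) {p : ℕ} (hp : p ≠ 0) (n : ℕ) :
    ({v : ℤ × ℤ | binForm a b c v = p * n ∧ (p : ℤ) ∣ v.1 ∧ (p : ℤ) ∣ v.2}.ncard : ℤ) =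
      dilate p (repCount (binForm a b c)) n := by
  have hpZ : (p : ℤ) ≠ 0 := mod_cast hp
  have hscale (w : ℤ × ℤ) : binForm a b c ((p : ℤ) • w) = (p : ℤ) ^ 2 * binForm a b c w := by
    rw [QuadraticMap.map_smul, smul_eq_mul, sq]
  have hrange (v : ℤ × ℤ) : ((p : ℤ) ∣ v.1 ∧ (p : ℤ) ∣ v.2) ↔ v ∈ Set.range ((p : ℤ) • · ) := by
    simp [Dvd.dvd, Prod.ext_iff, eq_comm]
  simp only [hrange]
  rw [dilate]
  split_ifs with hn
  · obtain ⟨m, rfl⟩ := hn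
    rw [Nat.mul_div_cancel_left _ (Nat.pos_of_ne_zero hp),
      ← ncard_range_inter_eq_repCount (smul_right_injective _ hpZ) (pow_ne_zero 2 hpZ) hscale]
    simp only [Nat.cast_mul, sq, mul_assoc]
  · have hempty : {v | binForm a b c v = p * n ∧ v ∈ Set.range ((p : ℤ) • ·)} = ∅ := by
      refine Set.eq_empty_of_forall_notMem ?_
      rintro _ ⟨hv, w, rfl⟩
      rw [hscale, sq, mul_assoc] at hv
      exact hn (Int.natCast_dvd_natCast.1 ⟨_, (mul_left_cancel₀ hpZ hv).symm⟩)
    rw [hempty, Set.ncard_empty, Nat.cast_zero]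

section PosDef

variable {a b c : ℤ}

lemma binForm_nonneg (ha : 0 < a) (hD : discrim a b c < 0) (v : ℤ × ℤ) :
    0 ≤ binForm a b c v := by
  rw [discrim] at hD
  rw [binForm_apply]
  nlinarith [sq_nonneg (2 * a * v.1 + b * v.2), sq_nonneg v.2]

lemma norm_sq_le_binForm (ha : 0 < a) (hD : discrim a b c < 0) (v : ℤ × ℤ) :
    ‖v‖ ^ 2 ≤ 4 * (a + c) * (binForm a b c v : ℝ) := by
  have hc := pos_of_discrim_neg ha hD
  have hQ := binForm_nonneg ha hD v
  have hdisc : discrim a b c + 1 ≤ 0 := hD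
  rw [discrim] at hdisc
  have hfst : v.1 ^ 2 ≤ 4 * c * binForm a b c v := by
    rw [binForm_apply]
    nlinarith [sq_nonneg (2 * c * v.2 + b * v.1), sq_nonneg v.1]
  have hsnd : v.2 ^ 2 ≤ 4 * a * binForm a b c v := by
    rw [binForm_apply]
    nlinarith [sq_nonneg (2 * a * v.1 + b * v.2), sq_nonneg v.2]
  have key : max (|v.1|) (|v.2|) ^ 2 ≤ 4 * (a + c) * binForm a b c v := by
    rcases max_choice (|v.1|) (|v.2|) with h | h <;> rw [h, sq_abs] <;>
      nlinarith [mul_nonneg ha.le hQ, mul_nonneg hc.le hQ]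
  rw [Prod.norm_def, Int.norm_eq_abs, Int.norm_eq_abs]
  exact_mod_cast key

lemma finite_binForm_eq (ha : 0 < a) (hD : discrim a b c < 0) (n : ℤ) :
    {v | binForm a b c v = n}.Finite := by
  refine (isCompact_iff_finite.1 (isCompact_closedBall (0 : ℤ × ℤ) √(4 * (a + c) * n))).subset ?_
  intro v hv
  rw [mem_closedBall_zero_iff]
  apply Real.le_sqrt_of_sq_le
  simpa [Set.mem_ofPred.1 hv] using norm_sq_le_binForm ha hD v

end PosDef

/-- For a root `s` of `a x² + b x + c` modulo `p`, the form `f_s` with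
`f (p x + s y, y) = p * f_s (x, y)`, where `f = binForm a b c`. -/
def rootForm (a b c : ℤ) (p : ℕ) (s : ℤ) : QuadraticForm ℤ (ℤ × ℤ) :=
  binForm (a * p) (2 * a * s + b) ((a * s ^ 2 + b * s + c) / p)

/-- The roots of `a x² + b x + c` in `ZMod p`. -/
def rootsMod (a b c : ℤ) (p : ℕ) [NeZero p] : Finset (ZMod p) :=
  {s | a * s ^ 2 + b * s + c = 0}

lemma mem_rootsMod {a b c : ℤ} {p : ℕ} [NeZero p] {s : ZMod p} :
    s ∈ rootsMod a b c p ↔ a * s ^ 2 + b * s + c = 0 := by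
  simp [rootsMod]

section Hecke

variable {a b c : ℤ} {p : ℕ}

lemma dvd_of_mem_rootsMod [NeZero p] {s : ZMod p} (hs : s ∈ rootsMod a b c p) :
    (p : ℤ) ∣ a * (s.val : ℤ) ^ 2 + b * s.val + c := by
  rw [← ZMod.intCast_zmod_eq_zero_iff_dvd]
  simpa using mem_rootsMod.1 hs

lemma binForm_eq_mul_rootForm {s : ℤ} (hs : (p : ℤ) ∣ a * s ^ 2 + b * s + c) (w : ℤ × ℤ) :
    binForm a b c (p * w.1 + s * w.2, w.2) = p * rootForm a b c p s w := by
  simp only [rootForm, binForm_apply]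
  linear_combination -w.2 ^ 2 * Int.mul_ediv_cancel' hs

lemma ncard_fiber_eq_repCount_rootForm (hp : p ≠ 0) {s : ℤ}
    (hs : (p : ℤ) ∣ a * s ^ 2 + b * s + c) (n : ℕ) :
    ({v : ℤ × ℤ | binForm a b c v = p * n ∧ (p : ℤ) ∣ v.1 - s * v.2}.ncard : ℤ) =
      repCount (rootForm a b c p s) n := by
  have hpZ : (p : ℤ) ≠ 0 := mod_cast hp
  rw [← ncard_range_inter_eq_repCount (φ := fun w : ℤ × ℤ => (p * w.1 + s * w.2, w.2)) _ hpZ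
    (binForm_eq_mul_rootForm hs)]
  · congr! 5 with v
    constructor
    · rintro ⟨x, hx⟩
      exact ⟨(x, v.2), Prod.ext (by simp [← hx]) rfl⟩
    · rintro ⟨w, rfl⟩
      exact ⟨w.1, by ring⟩
  · rintro ⟨x, y⟩ ⟨x', y'⟩ h
    simp only [Prod.mk.injEq] at h ⊢
    obtain ⟨hx, rfl⟩ := h
    exact ⟨mul_left_cancel₀ hpZ (add_right_cancel hx), rfl⟩

lemma ratio_mem_rootsMod [Fact p.Prime] (hpa : ¬(p : ℤ) ∣ a) {v : ℤ × ℤ}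
    (hv : (p : ℤ) ∣ binForm a b c v) (hprim : ¬((p : ℤ) ∣ v.1 ∧ (p : ℤ) ∣ v.2)) :
    (v.2 : ZMod p) ≠ 0 ∧ (v.1 / v.2 : ZMod p) ∈ rootsMod a b c p := by
  simp only [binForm_apply, ← ZMod.intCast_zmod_eq_zero_iff_dvd, Int.cast_add, Int.cast_mul,
    Int.cast_pow] at hpa hv hprim
  have hy : (v.2 : ZMod p) ≠ 0 := fun hy => hprim ⟨by simpa [hy, hpa] using hv, hy⟩
  refine ⟨hy, mem_rootsMod.2 ?_⟩
  field_simp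
  linear_combination hv

lemma ratio_eq_iff [Fact p.Prime] {v : ℤ × ℤ} (hy : (v.2 : ZMod p) ≠ 0) (s : ZMod p) :
    (v.1 / v.2 : ZMod p) = s ↔ (p : ℤ) ∣ v.1 - s.val * v.2 := by
  rw [div_eq_iff hy, ← ZMod.intCast_zmod_eq_zero_iff_dvd, ← sub_eq_zero]
  simp

theorem repCount_prime_mul [Fact p.Prime] (ha : 0 < a) (hD : discrim a b c < 0)
    (hpa : ¬(p : ℤ) ∣ a) (n : ℕ) :
    repCount (binForm a b c) (p * n) - dilate p (repCount (binForm a b c)) n =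
      ∑ s ∈ rootsMod a b c p,
        (repCount (rootForm a b c p s.val) n - dilate p (repCount (binForm a b c)) n) := by
  have hp : p ≠ 0 := (Fact.out : p.Prime).ne_zero
  let S : Finset (ℤ × ℤ) := (finite_binForm_eq ha hD (p * n)).toFinset
  have hS {v} : v ∈ S ↔ binForm a b c v = p * n := Set.Finite.mem_toFinset _
  let imprimitive (v : ℤ × ℤ) : Prop := (p : ℤ) ∣ v.1 ∧ (p : ℤ) ∣ v.2
  have hcard (P : ℤ × ℤ → Prop) [DecidablePred P] :
      ((S.filter P).card : ℤ) = {v | binForm a b c v = p * n ∧ P v}.ncard := by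
    rw [← Set.ncard_coe_finset]; simp [hS]
  have himprimitive := (hcard imprimitive).trans (ncard_dvd_eq_dilate a b c hp n)
  have htotal : (S.card : ℤ) = repCount (binForm a b c) (p * n) := by
    simpa [repCount] using hcard fun _ => True
  have hprimitive {v} (hv : v ∈ S.filter (¬imprimitive ·)) :=
    ratio_mem_rootsMod hpa ⟨_, hS.1 (Finset.mem_filter.1 hv).1⟩ (Finset.mem_filter.1 hv).2
  have hfiber : ∀ s ∈ rootsMod a b c p,
      (((S.filter (¬imprimitive ·)).filter fun v => (v.1 / v.2 : ZMod p) = s).card : ℤ) =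
        repCount (rootForm a b c p s.val) n - dilate p (repCount (binForm a b c)) n := by
    intro s hs
    have himp : ∀ v, imprimitive v → (p : ℤ) ∣ v.1 - s.val * v.2 :=
      fun v hv => dvd_sub hv.1 (hv.2.mul_left _)
    rw [← ncard_fiber_eq_repCount_rootForm hp (dvd_of_mem_rootsMod hs), ← himprimitive, ← hcard,
      Finset.filter_congr fun v hv => ratio_eq_iff (hprimitive hv).1 s,
      ← Finset.card_filter_add_card_filter_not (s := S.filter _) imprimitive,
      Finset.filter_comm _ imprimitive, Finset.filter_comm,
      Finset.filter_true_of_mem fun v hv => himp v (Finset.mem_filter.1 hv).2]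
    push_cast
    ring
  rw [← Finset.sum_congr rfl hfiber, ← htotal, ← himprimitive, ← Nat.cast_sum,
    ← Finset.card_eq_sum_card_fiberwise fun v hv => (hprimitive hv).2,
    ← S.card_filter_add_card_filter_not imprimitive, Nat.cast_add, add_sub_cancel_left]

end Hecke

section Genus

variable {a b c : ℤ} {p : ℕ}

lemma exists_rootForm_equivalent_genusForm (hp : 0 < p) (ha : 0 < a) (hD : discrim a b c = -15)
    {s : ℤ} (hs : (p : ℤ) ∣ a * s ^ 2 + b * s + c) :
    ∃ δ, (rootForm a b c p s).Equivalent (genusForm δ) := by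
  refine exists_equivalent_genusForm (mul_pos ha (mod_cast hp)) ?_
  rw [← hD, discrim, discrim]
  linear_combination -4 * a * Int.mul_ediv_cancel' hs

variable [Fact p.Prime]

lemma card_rootsMod (hp : p ≠ 2) (hpa : ¬(p : ℤ) ∣ a) :
    ((rootsMod a b c p).card : ℤ) = 1 + legendreSym p (discrim a b c) := by
  have htwo : (2 : ZMod p) ≠ 0 := Ring.two_ne_zero (by rwa [ZMod.ringChar_zmod_n])
  have ha : (a : ZMod p) ≠ 0 := mt (ZMod.intCast_zmod_eq_zero_iff_dvd a p).1 hpa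
  rw [add_comm, ← legendreSym.card_sqrts p hp, Nat.cast_inj]
  refine Finset.card_nbij' (2 * a * · + b) (fun x => (x - b) / (2 * a)) ?_ ?_ ?_ ?_
  · intro s hs
    have := mem_rootsMod.1 hs
    rw [Finset.mem_coe, Set.mem_toFinset, Set.mem_ofPred_eq, discrim]
    push_cast
    linear_combination 4 * a * this
  · intro x hx
    rw [Finset.mem_coe, Set.mem_toFinset, Set.mem_ofPred_eq, discrim] at hx
    push_cast at hx
    refine mem_rootsMod.2 ?_
    field_simp
    linear_combination hx
  · intro s _
    field_simp
    ring
  · intro x _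
    field_simp
    ring

lemma legendreSym_neg_fifteen (hp : p ≠ 2) :
    legendreSym p (-15) = legendreSym 3 p * legendreSym 5 p := by
  have hodd : p % 2 = 1 := (Fact.out : p.Prime).mod_two_eq_one_iff_ne_two.2 hp
  rw [legendreSym.quadratic_reciprocity' hp (by norm_num : 3 ≠ 2),
    ← legendreSym.quadratic_reciprocity_one_mod_four (by norm_num : 5 % 4 = 1) hp,
    show (-15 : ℤ) = -1 * ((3 : ℕ) * (5 : ℕ)) by norm_num, legendreSym.mul, legendreSym.mul,
    legendreSym.at_neg_one hp, ZMod.χ₄_eq_neg_one_pow hodd]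
  simp [mul_assoc]

lemma card_rootsMod_of_discrim_eq (hpa : ¬(p : ℤ) ∣ a) (hD : discrim a b c = -15) :
    ((rootsMod a b c p).card : ℤ) = 1 + legendreSym 3 p * legendreSym 5 p := by
  rcases eq_or_ne p 2 with rfl | hp
  · have ha : (a : ZMod 2) = 1 := ZMod.intCast_eq_one_iff_odd.2 <| by
      rwa [← Int.not_even_iff_odd, even_iff_two_dvd]
    have hb : Odd b := by
      by_contra h
      obtain ⟨k, rfl⟩ := Int.not_odd_iff_even.1 h
      rw [discrim] at hD
      lia
    have hc : (c : ZMod 2) = 0 := ZMod.intCast_eq_zero_iff_even.2 <| by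
      obtain ⟨k, rfl⟩ := hb
      have hac : a * c = k * (k + 1) + 4 := by rw [discrim] at hD; linarith
      have : Even (a * c) := hac ▸ (Int.even_mul_succ_self k).add (by decide)
      exact (Int.even_mul.1 this).resolve_left (mt even_iff_two_dvd.1 hpa)
    have hroots : rootsMod a b c 2 = Finset.univ := by
      ext s
      simp [mem_rootsMod, ha, ZMod.intCast_eq_one_iff_odd.2 hb, hc, ZMod.pow_card,
        CharTwo.add_self_eq_zero]
    rw [hroots]
    decide
  · rw [card_rootsMod hp hpa, hD, legendreSym_neg_fifteen hp]

lemma legendreSym_eq_zero_or_eq_mul {Q Q' : QuadraticForm ℤ (ℤ × ℤ)} {e δ : ℤˣ}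
    (hQ : Q.Equivalent (genusForm e)) (hQ' : Q'.Equivalent (genusForm δ))
    {φ : ℤ × ℤ → ℤ × ℤ} {k : ℤ} (h : ∀ w, Q (φ w) = k * Q' w) {q : ℕ} [Fact q.Prime]
    (hq : q = 3 ∨ q = 5) : legendreSym q k = 0 ∨ legendreSym q k = (e * δ : ℤˣ) := by
  obtain ⟨f⟩ := hQ
  obtain ⟨g⟩ := hQ'.symm
  have hmul : legendreSym q (genusForm e (f (φ (g (1, 0))))) = legendreSym q k * δ := by
    rw [f.map_app, h, g.map_app, legendreSym.mul, legendreSym_genusForm_one_zero hq]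
  have := hmul ▸ legendreSym_genusForm hq e (f (φ (g (1, 0))))
  rcases Int.units_eq_one_or δ with rfl | rfl
  · simpa using this
  · simpa [neg_eq_iff_eq_neg] using this

lemma exists_genus_of_prime (p : ℕ) [Fact p.Prime] :
    ∃ η : ℤˣ, (1 + legendreSym 3 p * legendreSym 5 p) * η = legendreSym 3 p + legendreSym 5 p ∧
      ∀ δ : ℤˣ, (legendreSym 3 p = 0 ∨ legendreSym 3 p = δ) →
        (legendreSym 5 p = 0 ∨ legendreSym 5 p = δ) → δ = η := by
  have key : ∀ x y : SignType, ¬((x : ℤ) = 0 ∧ (y : ℤ) = 0) →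
      ∃ η : ℤˣ, (1 + (x : ℤ) * y) * η = x + y ∧
      ∀ δ : ℤˣ, ((x : ℤ) = 0 ∨ (x : ℤ) = δ) → ((y : ℤ) = 0 ∨ (y : ℤ) = δ) →
        δ = η := by
    decide
  have hsign (q : ℕ) [Fact q.Prime] : ∃ x : SignType, legendreSym q p = x := by
    rcases quadraticChar_isQuadratic (ZMod q) (p : ℤ) with h | h | h
    exacts [⟨0, h⟩, ⟨1, h⟩, ⟨-1, h.trans (by decide)⟩]
  have hne : ¬(legendreSym 3 p = 0 ∧ legendreSym 5 p = 0) := by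
    rw [legendreSym.eq_zero_iff, legendreSym.eq_zero_iff, Int.cast_natCast, Int.cast_natCast,
      ZMod.natCast_eq_zero_iff, ZMod.natCast_eq_zero_iff,
      Nat.prime_dvd_prime_iff_eq Nat.prime_three Fact.out,
      Nat.prime_dvd_prime_iff_eq Nat.prime_five Fact.out]
    lia
  obtain ⟨x, hx⟩ := hsign 3
  obtain ⟨y, hy⟩ := hsign 5
  rw [hx, hy] at hne ⊢
  exact key x y hne

theorem exists_repCount_genusForm_prime_mul (p : ℕ) [Fact p.Prime] :
    ∃ η : ℤˣ, (1 + legendreSym 3 p * legendreSym 5 p) * η = legendreSym 3 p + legendreSym 5 p ∧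
      ∀ e n, repCount (genusForm e) (p * n) - dilate p (repCount (genusForm e)) n =
        (1 + legendreSym 3 p * legendreSym 5 p) *
          (repCount (genusForm (e * η)) n - dilate p (repCount (genusForm e)) n) := by
  have hp : p.Prime := Fact.out
  obtain ⟨η, hη, hunique⟩ := exists_genus_of_prime p
  refine ⟨η, hη, fun e n => ?_⟩
  obtain ⟨a, b, c, ha, hpa, hD, hequiv⟩ := exists_equivalent_not_dvd p e
  have hroot : ∀ s ∈ rootsMod a b c p,
      repCount (rootForm a b c p s.val) = repCount (genusForm (e * η)) := by
    intro s hs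
    have hdvd := dvd_of_mem_rootsMod hs
    obtain ⟨δ, hδ⟩ := exists_rootForm_equivalent_genusForm hp.pos ha hD hdvd
    have hchar {q : ℕ} [Fact q.Prime] (hq : q = 3 ∨ q = 5) :=
      legendreSym_eq_zero_or_eq_mul hequiv hδ (binForm_eq_mul_rootForm hdvd) hq
    rw [← hunique (e * δ) (hchar (.inl rfl)) (hchar (.inr rfl)), ← mul_assoc,
      Int.units_mul_self, one_mul]
    exact repCount_congr hδ
  rw [← repCount_congr hequiv, repCount_prime_mul ha (by rw [hD]; norm_num) hpa,
    Finset.sum_congr rfl fun s hs => by rw [hroot s hs], Finset.sum_const, nsmul_eq_mul,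
    card_rootsMod_of_discrim_eq hpa hD]

end Genus

section HeckeRecursion

open scoped LSeries.notation

variable {R : Type*} [CommRing R]

/-- `F` satisfies the recursions of a Dirichlet series whose Euler factor at each prime `p` is
`(1 - χ p * p ^ (-s))⁻¹ * (1 - ψ p * p ^ (-s))⁻¹`. -/
def HeckeRecursion (χ ψ F : ℕ → R) : Prop :=
  ∀ p, p.Prime → ∀ n, F (p * n) = (χ p + ψ p) * F n - χ p * ψ p * dilate p F n

theorem HeckeRecursion.eq_mul {χ ψ F G : ℕ → R} (hF : HeckeRecursion χ ψ F)
    (hG : HeckeRecursion χ ψ G) (hG_one : G 1 = 1) {n : ℕ} (hn : n ≠ 0) : F n = F 1 * G n := by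
  induction n using Nat.strong_induction_on with
  | _ n ih =>
    rcases eq_or_ne n 1 with rfl | hn_one
    · rw [hG_one, mul_one]
    obtain ⟨p, hp, m, rfl⟩ := Nat.exists_prime_and_dvd hn_one
    have hm : m ≠ 0 := right_ne_zero_of_mul hn
    have hlt : m < p * m := lt_mul_left (Nat.pos_of_ne_zero hm) hp.one_lt
    have hdilate : dilate p F m = F 1 * dilate p G m := by
      rw [dilate, dilate]
      split_ifs with hpm
      · exact ih _ ((Nat.div_le_self m p).trans_lt hlt)
          (Nat.div_pos (Nat.le_of_dvd (Nat.pos_of_ne_zero hm) hpm) hp.pos).ne'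
      · rw [mul_zero]
    rw [hF p hp, hG p hp, ih m hlt hm, hdilate]
    ring

variable (χ ψ : ℕ →*₀ R) {p : ℕ}

lemma sum_divisorsAntidiagonal_filter_dvd (hp : p ≠ 0) (n : ℕ) :
    ∑ x ∈ n.divisorsAntidiagonal with p ∣ x.1, χ x.1 * ψ x.2 = χ p * dilate p (χ ⍟ ψ) n := by
  rw [dilate]
  split_ifs with hpn
  · obtain ⟨m, rfl⟩ := hpn
    rw [Nat.mul_div_cancel_left m (Nat.pos_of_ne_zero hp), LSeries.convolution_def, Finset.mul_sum]
    symm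
    refine Finset.sum_nbij' (fun x => (p * x.1, x.2)) (fun x => (x.1 / p, x.2)) ?_ ?_ ?_ ?_ ?_
    · rintro ⟨d, e⟩ h
      simp_all [mul_assoc]
    · rintro ⟨d, e⟩ h
      simp only [Finset.mem_filter, Nat.mem_divisorsAntidiagonal] at h ⊢
      obtain ⟨⟨h, h0⟩, k, rfl⟩ := h
      simp_all [mul_assoc]
    · rintro ⟨d, e⟩ _
      simp [hp]
    · rintro ⟨d, e⟩ h
      simp [Nat.mul_div_cancel' (Finset.mem_filter.1 h).2]
    · intro x _
      rw [map_mul, mul_assoc]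
  · rw [mul_zero, Finset.filter_false_of_mem, Finset.sum_empty]
    intro x hx hpx
    exact hpn (hpx.trans (Nat.dvd_of_mem_divisors (Nat.fst_mem_divisors_of_mem_antidiagonal hx)))

lemma sum_divisorsAntidiagonal_filter_not_dvd (hp : p.Prime) (n : ℕ) :
    ∑ x ∈ (p * n).divisorsAntidiagonal with ¬p ∣ x.1, χ x.1 * ψ x.2 =
      ψ p * ∑ x ∈ n.divisorsAntidiagonal with ¬p ∣ x.1, χ x.1 * ψ x.2 := by
  rw [Finset.mul_sum]
  symm
  refine Finset.sum_nbij' (fun x => (x.1, p * x.2)) (fun x => (x.1, x.2 / p)) ?_ ?_ ?_ ?_ ?_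
  · rintro ⟨d, e⟩ h
    simp_all [mul_left_comm, hp.ne_zero]
  · rintro ⟨d, e⟩ h
    simp only [Finset.mem_filter, Nat.mem_divisorsAntidiagonal] at h ⊢
    obtain ⟨⟨h, h0⟩, hd⟩ := h
    obtain ⟨k, rfl⟩ := ((hp.dvd_mul.1 ⟨n, h⟩).resolve_left hd)
    simp_all [mul_left_comm, hp.ne_zero]
  · rintro ⟨d, e⟩ _
    simp [hp.ne_zero]
  · rintro ⟨d, e⟩ h
    simp only [Finset.mem_filter, Nat.mem_divisorsAntidiagonal] at h
    have hpe := ((hp.dvd_mul.1 ⟨n, h.1.1⟩).resolve_left h.2)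
    simp [Nat.mul_div_cancel' hpe]
  · intro x _
    rw [map_mul]
    ring

theorem heckeRecursion_convolution : HeckeRecursion χ ψ (χ ⍟ ψ) := by
  intro p hp n
  have hsplit (m : ℕ) : (χ ⍟ ψ) m = χ p * dilate p (χ ⍟ ψ) m +
      ∑ x ∈ m.divisorsAntidiagonal with ¬p ∣ x.1, χ x.1 * ψ x.2 := by
    rw [← sum_divisorsAntidiagonal_filter_dvd χ ψ hp.ne_zero, Finset.sum_filter_add_sum_filter_not,
      LSeries.convolution_def]
  rw [hsplit (p * n), dilate_mul_left hp.ne_zero, sum_divisorsAntidiagonal_filter_not_dvd χ ψ hp]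
  linear_combination -ψ p * hsplit n

end HeckeRecursion

/-- The Legendre symbol `(n / q)` as a completely multiplicative function of `n : ℕ`. -/
def legendreChar (q : ℕ) [Fact q.Prime] : ℕ →*₀ ℤ :=
  (legendreSym.hom q).comp (Nat.castRingHom ℤ).toMonoidWithZeroHom

@[simp] lemma legendreChar_apply (q : ℕ) [Fact q.Prime] (n : ℕ) :
    legendreChar q n = legendreSym q n := rfl

/-- The difference of the representation numbers of the two genera of discriminant `-15`. -/
noncomputable def genusDiff (n : ℕ) : ℤ :=
  repCount (genusForm 1) n - repCount (genusForm (-1)) n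

theorem heckeRecursion_genusDiff :
    HeckeRecursion (legendreChar 3) (legendreChar 5) genusDiff := by
  intro p hp n
  have : Fact p.Prime := ⟨hp⟩
  obtain ⟨η, hη, hrec⟩ := exists_repCount_genusForm_prime_mul p
  have hdilate : dilate p genusDiff n =
      dilate p (repCount (genusForm 1)) n - dilate p (repCount (genusForm (-1))) n := dilate_sub ..
  have hone := hrec 1 n
  have hneg := hrec (-1) n
  have hdiff : repCount (genusForm η) n - repCount (genusForm (-η)) n = η * genusDiff n := by
    rcases Int.units_eq_one_or η with rfl | rfl <;> simp [genusDiff]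
  rw [hdilate, genusDiff, legendreChar_apply, legendreChar_apply, ← hη]
  rw [one_mul] at hone
  rw [neg_one_mul] at hneg
  linear_combination hone - hneg + (1 + legendreSym 3 p * legendreSym 5 p) * hdiff

lemma repCount_genusForm_one_one : repCount (genusForm 1) 1 = 2 := by
  have hset : {v | binForm 1 1 4 v = (1 : ℕ)} = {(1, 0), (-1, 0)} := by
    ext ⟨x, y⟩
    simp only [binForm_apply, Set.mem_ofPred_eq, Set.mem_insert_iff, Set.mem_singleton_iff,
      Prod.mk.injEq]
    constructor
    · intro h
      have hy : y = 0 := by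
        by_contra hy
        push_cast at h
        nlinarith [sq_nonneg (2 * x + y), Int.one_le_abs hy, sq_abs y]
      simp_all
    · rintro (⟨rfl, rfl⟩ | ⟨rfl, rfl⟩) <;> simp
  rw [genusForm_one, repCount, hset, Set.ncard_pair (by decide), Nat.cast_two]

lemma repCount_genusForm_neg_one_one : repCount (genusForm (-1)) 1 = 0 := by
  have hset : {v | genusForm (-1) v = (1 : ℕ)} = ∅ := Set.eq_empty_of_forall_notMem fun v hv => by
    have := legendreSym_genusForm (.inl rfl) (-1) v (q := 3)
    rw [Set.mem_ofPred.1 hv] at this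
    simp at this
  rw [repCount, hset, Set.ncard_empty, Nat.cast_zero]

open scoped LSeries.notation in
theorem genusDiff_eq_two_mul_convolution {n : ℕ} (hn : n ≠ 0) :
    genusDiff n = 2 * (legendreChar 3 ⍟ legendreChar 5) n := by
  have hone : genusDiff 1 = 2 := by
    rw [genusDiff, repCount_genusForm_one_one, repCount_genusForm_neg_one_one, sub_zero]
  rw [← hone]
  exact heckeRecursion_genusDiff.eq_mul (heckeRecursion_convolution _ _)
    (by simp [LSeries.convolution_def]) hn

section Index

variable {a b c : ℤ}

lemma even_binForm_iff (ha : Odd a) (hb : Odd b) (hc : Even c) (v : ℤ × ℤ) :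
    Even (binForm a b c v) ↔ (Even v.2 → Even v.1) := by
  rw [binForm_apply]
  have := Int.not_even_iff_odd.2 ha
  have := Int.not_even_iff_odd.2 hb
  simp only [Int.even_add, Int.even_mul, Int.even_pow, *]
  grind

lemma ncard_even_snd_eq_repCount (n : ℕ) :
    ({v | binForm a b c v = n ∧ (2 : ℤ) ∣ v.2}.ncard : ℤ) =
      repCount (binForm a (2 * b) (4 * c)) n := by
  have hinj : Function.Injective fun w : ℤ × ℤ => (w.1, 2 * w.2) := by
    rintro ⟨x, y⟩ ⟨x', y'⟩ h
    simpa using h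
  have hφ (w : ℤ × ℤ) :
      binForm a b c (w.1, 2 * w.2) = 1 * binForm a (2 * b) (4 * c) w := by
    simp only [binForm_apply]
    ring
  rw [← ncard_range_inter_eq_repCount hinj one_ne_zero hφ, one_mul]
  congr! 5 with v
  constructor
  · rintro ⟨y, hy⟩
    exact ⟨(v.1, y), Prod.ext rfl hy.symm⟩
  · rintro ⟨w, rfl⟩
    exact dvd_mul_right 2 w.2

theorem repCount_binForm_of_odd (ha : Odd a) (hb : Odd b) (hc : Even c) {n : ℕ} (hn : Odd n) :
    repCount (binForm a (2 * b) (4 * c)) n = repCount (binForm a b c) n := by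
  rw [← ncard_even_snd_eq_repCount, repCount]
  congr! 4 with v
  refine and_iff_left_of_imp fun hv => ?_
  have hodd : ¬Even (binForm a b c v) := by rw [hv]; simpa using hn
  rw [even_binForm_iff ha hb hc] at hodd
  exact even_iff_two_dvd.1 (Classical.not_imp.1 hodd).1

theorem repCount_binForm_two_mul (ha : Odd a) (hb : Odd b) (hc : Even c) (n : ℕ) :
    repCount (binForm a (2 * b) (4 * c)) (2 * n) = dilate 2 (repCount (binForm a b c)) n := by
  rw [← ncard_even_snd_eq_repCount, ← ncard_dvd_eq_dilate a b c two_ne_zero]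
  congr! 4 with v
  simp only [Nat.cast_mul, Nat.cast_ofNat, and_congr_right_iff, ← even_iff_two_dvd,
    iff_and_self]
  exact fun hv => (even_binForm_iff ha hb hc v).1 (hv ▸ even_two_mul _)

end Index

theorem repCount_sub_repCount_eq (n : ℕ) :
    repCount (binForm 1 0 15) n - repCount (binForm 3 0 5) n =
      genusDiff n + 2 * dilate 2 genusDiff n + 2 * dilate 4 genusDiff n := by
  have hone : repCount (binForm 1 0 15) = repCount (binForm 1 (2 * 1) (4 * 4)) :=
    repCount_congr (binForm_equivalent_shear 1 0 15 1)
  have hneg : repCount (binForm 3 0 5) = repCount (binForm 3 (2 * 3) (4 * 2)) :=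
    repCount_congr (binForm_equivalent_shear 3 0 5 1)
  have hdiff (n : ℕ) :
      genusDiff n = repCount (binForm 1 1 4) n - repCount (binForm 3 3 2) n := by
    rw [genusDiff, genusForm_one, repCount_congr binForm_three_three_two_equivalent]
  rw [hone, hneg]
  rcases Nat.even_or_odd' n with ⟨m, rfl | rfl⟩
  · have hrec : genusDiff (2 * m) = -2 * genusDiff m - dilate 2 genusDiff m := by
      have hthree : legendreChar 3 2 = -1 := by decide
      have hfive : legendreChar 5 2 = -1 := by decide
      rw [heckeRecursion_genusDiff 2 Nat.prime_two m, hthree, hfive]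
      ring
    have hdilate : dilate 2 genusDiff m =
        dilate 2 (repCount (binForm 1 1 4)) m - dilate 2 (repCount (binForm 3 3 2)) m := by
      rw [← dilate_sub, ← funext hdiff]
    rw [repCount_binForm_two_mul odd_one odd_one (by decide) m,
      repCount_binForm_two_mul (by decide) (by decide) even_two m, ← hdilate, hrec,
      show 4 = 2 * 2 from rfl, dilate_mul_mul two_ne_zero, dilate_mul_left two_ne_zero]
    ring
  · have htwo : ¬2 ∣ 2 * m + 1 := by lia
    have hfour : ¬4 ∣ 2 * m + 1 := by lia
    rw [repCount_binForm_of_odd odd_one odd_one (by decide) (odd_two_mul_add_one m),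
      repCount_binForm_of_odd (by decide) (by decide) even_two (odd_two_mul_add_one m), ← hdiff,
      dilate_of_not_dvd htwo, dilate_of_not_dvd hfour]
    ring

section DirichletSeries

open scoped LSeries.notation

/-- The value at `k` of the Epstein zeta function of the quadratic form `Q`; for `k ≠ 0` the zero
vector contributes `1 / 0 = 0`. -/
noncomputable def epsteinZeta (Q : QuadraticForm ℤ (ℤ × ℤ)) (k : ℕ) : ℝ :=
  ∑' v, 1 / (Q v : ℝ) ^ k

/-- The value at `k` of the Dirichlet `L`-function of the Legendre symbol `(· / q)`. -/
noncomputable def legendreL (q : ℕ) [Fact q.Prime] (k : ℕ) : ℝ :=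
  ∑' n : ℕ, (legendreChar q n : ℝ) / (n : ℝ) ^ k

variable {a b c : ℤ} {k : ℕ}

lemma summable_inv_norm_pow (hk : 2 ≤ k) : Summable fun v : ℤ × ℤ => (‖v‖ ^ (2 * k))⁻¹ := by
  have hk' : (2 : ℝ) < (2 * k : ℕ) := by exact_mod_cast (by lia : 2 < 2 * k)
  refine ((finTwoArrowEquiv ℤ).symm.summable_iff.2
    (EisensteinSeries.summable_one_div_norm_rpow hk')).congr fun v => ?_
  have hnorm : ‖(finTwoArrowEquiv ℤ).symm v‖ = ‖v‖ := by
    simp [EisensteinSeries.norm_eq_max_natAbs, Prod.norm_def, Int.norm_eq_abs, Nat.cast_natAbs]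
  rw [Function.comp_apply, hnorm, Real.rpow_neg (norm_nonneg v), Real.rpow_natCast]

lemma summable_one_div_binForm_pow (ha : 0 < a) (hD : discrim a b c < 0) (hk : 2 ≤ k) :
    Summable fun v => 1 / (binForm a b c v : ℝ) ^ k := by
  have hC : (0 : ℝ) < 4 * (a + c) := by
    have := pos_of_discrim_neg ha hD
    exact_mod_cast (by lia : 0 < 4 * (a + c))
  have hQ (v : ℤ × ℤ) : (0 : ℝ) ≤ binForm a b c v := mod_cast binForm_nonneg ha hD v
  refine ((summable_inv_norm_pow hk).mul_left ((4 * (a + c) : ℝ) ^ k)).of_nonneg_of_le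
    (fun v => by have := hQ v; positivity) fun v => ?_
  rcases eq_or_ne v 0 with rfl | hv
  · simp [show k ≠ 0 by lia]
  have hv : 0 < ‖v‖ := norm_pos_iff.2 hv
  have hle := norm_sq_le_binForm ha hD v
  have hQpos : (0 : ℝ) < binForm a b c v :=
    (pos_iff_pos_of_mul_pos ((pow_pos hv 2).trans_le hle)).1 hC
  rw [← div_eq_mul_inv, div_le_div_iff₀ (by positivity) (by positivity), one_mul, ← mul_pow,
    pow_mul]
  exact pow_le_pow_left₀ (by positivity) hle k

theorem hasSum_repCount_div_pow (ha : 0 < a) (hD : discrim a b c < 0) (hk : 2 ≤ k) :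
    HasSum (fun n : ℕ => (repCount (binForm a b c) n : ℝ) / (n : ℝ) ^ k)
      (epsteinZeta (binForm a b c) k) := by
  refine ((summable_one_div_binForm_pow ha hD hk).hasSum.tsum_fiberwise
    fun v => (binForm a b c v).natAbs).congr_fun fun n => ?_
  have hfiber : (fun v => (binForm a b c v).natAbs) ⁻¹' {n} = {v | binForm a b c v = n} := by
    ext v
    have := binForm_nonneg ha hD v
    simp only [Set.mem_preimage, Set.mem_singleton_iff, Set.mem_ofPred_eq]
    lia
  have hterm (v : {v | binForm a b c v = n}) :
      1 / (binForm a b c v : ℝ) ^ k = 1 / (n : ℝ) ^ k := by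
    rw [v.2, Int.cast_natCast]
  rw [hfiber, tsum_congr hterm, tsum_const, Nat.card_coe_set_eq, nsmul_eq_mul, repCount,
    Int.cast_natCast, mul_one_div]

lemma hasSum_dilate_div_pow {p : ℕ} (hp : p ≠ 0) {F : ℕ → ℤ} {S : ℝ}
    (h : HasSum (fun n : ℕ => (F n : ℝ) / (n : ℝ) ^ k) S) :
    HasSum (fun n : ℕ => ((dilate p F n : ℤ) : ℝ) / (n : ℝ) ^ k) (S / p ^ k) := by
  rw [← (mul_right_injective₀ hp).hasSum_iff fun n hn => ?_]
  · refine (h.div_const _).congr_fun fun n => ?_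
    rw [Function.comp_apply, dilate_mul_left hp, Nat.cast_mul, mul_pow, div_div, mul_comm]
  · rw [dilate_of_not_dvd fun ⟨m, hm⟩ => hn ⟨m, hm.symm⟩, Int.cast_zero, zero_div]

theorem hasSum_convolution_div_pow {f g : ℕ → ℤ}
    (hf : Summable fun n : ℕ => ‖(f n : ℝ) / (n : ℝ) ^ k‖)
    (hg : Summable fun n : ℕ => ‖(g n : ℝ) / (n : ℝ) ^ k‖) (hk : k ≠ 0) :
    HasSum (fun n : ℕ => ((f ⍟ g) n : ℝ) / (n : ℝ) ^ k)
      ((∑' n : ℕ, (f n : ℝ) / (n : ℝ) ^ k) * ∑' n : ℕ, (g n : ℝ) / (n : ℝ) ^ k) := by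
  have hterm (x : ℕ × ℕ) : (f x.1 : ℝ) / (x.1 : ℝ) ^ k * ((g x.2 : ℝ) / (x.2 : ℝ) ^ k) =
      (f x.1 * g x.2 : ℤ) / ((x.1 * x.2 : ℕ) : ℝ) ^ k := by
    push_cast
    rw [div_mul_div_comm, mul_pow]
  rw [tsum_mul_tsum_of_summable_norm hf hg]
  refine ((summable_mul_of_summable_norm hf hg).hasSum.tsum_fiberwise
    fun x => x.1 * x.2).congr_fun fun n => ?_
  have hfiber (x : (fun x : ℕ × ℕ => x.1 * x.2) ⁻¹' {n}) :=
    (hterm x).trans (by rw [show x.1.1 * x.1.2 = n from x.2])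
  rw [tsum_congr hfiber]
  rcases eq_or_ne n 0 with rfl | hn
  · simp [hk]
  · have hset : (fun x : ℕ × ℕ => x.1 * x.2) ⁻¹' {n} = ↑n.divisorsAntidiagonal := by
      ext x
      simp [hn]
    rw [hset, n.divisorsAntidiagonal.tsum_subtype'
      fun x => ((f x.1 * g x.2 : ℤ) : ℝ) / (n : ℝ) ^ k, ← Finset.sum_div, LSeries.convolution_def,
      Int.cast_sum]

lemma summable_norm_legendreChar_div_pow (q : ℕ) [Fact q.Prime] (hk : 2 ≤ k) :
    Summable fun n : ℕ => ‖(legendreChar q n : ℝ) / (n : ℝ) ^ k‖ := by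
  refine (Real.summable_one_div_nat_pow.2 hk).of_nonneg_of_le (fun n => norm_nonneg _) fun n => ?_
  have hle : ‖(legendreChar q n : ℝ)‖ ≤ 1 := by
    rcases quadraticChar_isQuadratic (ZMod q) (n : ℤ) with h | h | h <;>
      rw [legendreChar_apply, legendreSym, h] <;> norm_num
  rw [norm_div, norm_pow, Real.norm_natCast]
  gcongr

theorem hasSum_genusDiff_div_pow (hk : 2 ≤ k) :
    HasSum (fun n : ℕ => (genusDiff n : ℝ) / (n : ℝ) ^ k)
      (epsteinZeta (binForm 1 1 4) k - epsteinZeta (binForm 2 1 2) k) := by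
  have hone := hasSum_repCount_div_pow (a := 1) (b := 1) (c := 4) one_pos (by decide) hk
  have htwo := hasSum_repCount_div_pow (a := 2) (b := 1) (c := 2) two_pos (by decide) hk
  refine (hone.sub htwo).congr_fun fun n => ?_
  rw [genusDiff, genusForm_one, genusForm_neg_one, Int.cast_sub, sub_div]

theorem epsteinZeta_sub_discrim_neg_fifteen (hk : 2 ≤ k) :
    epsteinZeta (binForm 1 1 4) k - epsteinZeta (binForm 2 1 2) k =
      2 * (legendreL 3 k * legendreL 5 k) := by
  have hk0 : k ≠ 0 := by lia
  have hprod := hasSum_convolution_div_pow (summable_norm_legendreChar_div_pow 3 hk)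
    (summable_norm_legendreChar_div_pow 5 hk) hk0
  refine (hasSum_genusDiff_div_pow hk).unique <| (hprod.mul_left 2).congr_fun fun n => ?_
  rcases eq_or_ne n 0 with rfl | hn
  · simp [hk0]
  · rw [genusDiff_eq_two_mul_convolution hn, Int.cast_mul, Int.cast_two, mul_div_assoc]

theorem epsteinZeta_sub_discrim_neg_sixty (hk : 2 ≤ k) :
    epsteinZeta (binForm 1 0 15) k - epsteinZeta (binForm 3 0 5) k =
      (1 + 2 / 2 ^ k + 2 / 4 ^ k) *
        (epsteinZeta (binForm 1 1 4) k - epsteinZeta (binForm 2 1 2) k) := by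
  have h := hasSum_genusDiff_div_pow hk
  have htwo := (hasSum_dilate_div_pow two_ne_zero h).mul_left 2
  have hfour := (hasSum_dilate_div_pow four_ne_zero h).mul_left 2
  have hone := hasSum_repCount_div_pow (a := 1) (b := 0) (c := 15) (by decide) (by decide) hk
  have hthree := hasSum_repCount_div_pow (a := 3) (b := 0) (c := 5) (by decide) (by decide) hk
  rw [(hone.sub hthree).unique <| ((h.add htwo).add hfour).congr_fun fun n => ?_]
  · push_cast
    ring
  · rw [← sub_div, ← Int.cast_sub, repCount_sub_repCount_eq]
    push_cast
    ring

lemma hasSum_subtype_ne_zero (ha : 0 < a) (hD : discrim a b c < 0) (hk : 2 ≤ k) :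
    HasSum (fun p : {p : ℤ × ℤ // p ≠ 0} => 1 / (binForm a b c p : ℝ) ^ k)
      (epsteinZeta (binForm a b c) k) := by
  refine (hasSum_subtype_iff_of_support_subset (s := {p : ℤ × ℤ | p ≠ 0})
    (f := fun p => 1 / (binForm a b c p : ℝ) ^ k) ?_).2
      (summable_one_div_binForm_pow ha hD hk).hasSum
  rintro _ hv rfl
  exact hv (by simp [show k ≠ 0 by lia])

end DirichletSeries

section SpecialValues

open Real

lemma cos_sub_cos_two_mul_eq_legendreSym (n : ℤ) :
    cos (2 * π * n / 5) - cos (2 * (2 * π * n / 5)) = √5 / 2 * legendreSym 5 n := by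
  have hfive : √5 ^ 2 = 5 := sq_sqrt (by norm_num)
  have hcos_one : cos (2 * π / 5) = (√5 - 1) / 4 := by
    rw [show 2 * π / 5 = 2 * (π / 5) by ring, cos_two_mul, cos_pi_div_five]
    linear_combination hfive / 8
  have hcos_two : cos (2 * π * 2 / 5) = -(1 + √5) / 4 := by
    rw [show 2 * π * 2 / 5 = π - π / 5 by ring, cos_pi_sub, cos_pi_div_five, neg_div]
  obtain ⟨m, r, rfl, hr⟩ : ∃ m r : ℤ, n = 5 * m + r ∧
      (r = 0 ∨ r = 1 ∨ r = -1 ∨ r = 2 ∨ r = -2) :=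
    ⟨(n + 2) / 5, (n + 2) % 5 - 2, by lia, by lia⟩
  have hperiod : cos (2 * π * (5 * m + r : ℤ) / 5) = cos (2 * π * r / 5) := by
    rw [← cos_add_int_mul_two_pi (2 * π * r / 5) m]
    congr 1
    push_cast
    ring
  have hsym : legendreSym 5 (5 * m + r) = legendreSym 5 r := by
    rw [legendreSym.mod, legendreSym.mod 5 r, Nat.cast_ofNat, Int.mul_add_emod_self_left]
  have hsym_values : legendreSym 5 (-1) = 1 ∧ legendreSym 5 2 = -1 ∧ legendreSym 5 (-2) = -1 := by
    decide
  have hvalues : (cos (2 * π * r / 5) = 1 ∧ legendreSym 5 r = 0) ∨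
      (cos (2 * π * r / 5) = (√5 - 1) / 4 ∧ legendreSym 5 r = 1) ∨
      (cos (2 * π * r / 5) = -(1 + √5) / 4 ∧ legendreSym 5 r = -1) := by
    rcases hr with rfl | rfl | rfl | rfl | rfl <;>
      simp [hsym_values, hcos_one, hcos_two, neg_div, legendreSym.at_one]
  rw [cos_two_mul, hperiod, hsym]
  rcases hvalues with ⟨hcos, hsym⟩ | ⟨hcos, hsym⟩ | ⟨hcos, hsym⟩ <;> rw [hcos, hsym] <;> push_cast
  · ring
  all_goals linear_combination -hfive / 8

lemma sqrt_five_mul_legendreL_five_two : √5 * legendreL 5 2 = 4 * π ^ 2 / 25 := by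
  have hcos {x : ℝ} (hx : x ∈ Set.Icc 0 1) := hasSum_one_div_nat_pow_mul_cos one_ne_zero hx
  have hone := hcos (x := 1 / 5) (by norm_num)
  have htwo := hcos (x := 2 / 5) (by norm_num)
  have hL := (summable_norm_legendreChar_div_pow 5 le_rfl).of_norm.hasSum.mul_left (√5 / 2)
  have key := hL.unique <| (hone.sub htwo).congr_fun fun n => ?_
  · rw [← legendreL, ← bernoulliFun, ← bernoulliFun, mul_one, bernoulliFun_two,
      bernoulliFun_two] at key
    norm_num [Nat.factorial] at key
    linear_combination 2 * key
  · have hcosine := cos_sub_cos_two_mul_eq_legendreSym n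
    rw [Int.cast_natCast] at hcosine
    rw [← mul_sub, show 2 * π * n * (1 / 5) = 2 * π * n / 5 by ring,
      show 2 * π * n * (2 / 5) = 2 * (2 * π * n / 5) by ring, hcosine, legendreChar_apply]
    ring

lemma legendreL_three_eq {k : ℕ} (hk : 2 ≤ k) :
    legendreL 3 k = ∑' n : ℕ, chiNeg3 (n + 1) / ((n : ℝ) + 1) ^ k := by
  have hchar (n : ℕ) : (legendreChar 3 n : ℝ) = chiNeg3 n := by
    have hmod : n % 3 = 0 ∨ n % 3 = 1 ∨ n % 3 = 2 := by lia
    rw [legendreChar_apply, legendreSym.mod, ← Int.natCast_mod, chiNeg3]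
    rcases hmod with h | h | h <;> simp [h, show legendreSym 3 2 = -1 by decide]
  rw [legendreL, (summable_norm_legendreChar_div_pow 3 hk).of_norm.tsum_eq_zero_add]
  simp [← hchar]

end SpecialValues

/-- Proposition 3 of the paper: the Dirichlet part of the Mahler measure
equals `(8/5)·d₃`. -/
theorem dirichlet_part_eq :
    (6 * Real.sqrt 15 / Real.pi ^ 3) *
        (∑' p : {p : ℤ × ℤ // p ≠ 0},
          (1 / ((p.1.1 : ℝ) ^ 2 + 15 * (p.1.2 : ℝ) ^ 2) ^ 2 -
            1 / (3 * (p.1.1 : ℝ) ^ 2 + 5 * (p.1.2 : ℝ) ^ 2) ^ 2 +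
            1 / (2 * (p.1.1 : ℝ) ^ 2 + (p.1.1 : ℝ) * (p.1.2 : ℝ) + 2 * (p.1.2 : ℝ) ^ 2) ^ 2 -
            1 / ((p.1.1 : ℝ) ^ 2 + (p.1.1 : ℝ) * (p.1.2 : ℝ) + 4 * (p.1.2 : ℝ) ^ 2) ^ 2)) =
      (8 / 5) * d3 := by
  have hsum {a b c : ℤ} (ha : 0 < a) (hD : discrim a b c < 0) :=
    hasSum_subtype_ne_zero ha hD le_rfl
  have hlattice := (((hsum (a := 1) (b := 0) (c := 15) (by decide) (by decide)).sub
    (hsum (a := 3) (b := 0) (c := 5) (by decide) (by decide))).add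
    (hsum (a := 2) (b := 1) (c := 2) (by decide) (by decide))).sub
    (hsum (a := 1) (b := 1) (c := 4) (by decide) (by decide))
  have hzeta : epsteinZeta (binForm 1 0 15) 2 - epsteinZeta (binForm 3 0 5) 2 +
      epsteinZeta (binForm 2 1 2) 2 - epsteinZeta (binForm 1 1 4) 2 =
        5 / 4 * (legendreL 3 2 * legendreL 5 2) := by
    linear_combination epsteinZeta_sub_discrim_neg_sixty (le_refl 2) +
      5 / 8 * epsteinZeta_sub_discrim_neg_fifteen (le_refl 2)
  have hsqrt : √15 = √3 * √5 := by rw [← Real.sqrt_mul (by norm_num)]; norm_num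
  rw [(hlattice.congr_fun fun p => by simp [binForm_apply]).tsum_eq, hzeta, hsqrt, d3,
    ← legendreL_three_eq le_rfl]
  calc 6 * (√3 * √5) / Real.pi ^ 3 * (5 / 4 * (legendreL 3 2 * legendreL 5 2))
      = 15 / 2 * √3 * legendreL 3 2 / Real.pi ^ 3 * (√5 * legendreL 5 2) := by ring
    _ = 8 / 5 * (3 * √3 / (4 * Real.pi) * legendreL 3 2) := by
      rw [sqrt_five_mul_legendreL_five_two]
      field_simp
      ring
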